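/- Let D be the set of finitely supported sequences a : ℕ → {0,1} equipped with the metric d(a,b) = Σ_{i∈ℕ} |a_i − b_i|·2^i (a finite sum), and let ℕ carry the Euclidean metric. The map f : D → ℕ defined by f(a) = Σ_{i∈ℕ} a_i·2^i is a bijection, is coarse, and is coarsely 2-to-1. -/

import Mathlib

open Metric Bornology Function Set

/-- A map between metric spaces is (coarsely) proper if preimages of bounded
sets are bounded. -/
def MetricallyProper {X Y : Type*} [MetricSpace X] [MetricSpace Y] (f : X → Y) : Prop :=
  ∀ B : Set Y, IsBounded B → IsBounded (f ⁻¹' B)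

/-- A coarse map: proper, and uniformly bornologous. -/
def CoarseMap {X Y : Type*} [MetricSpace X] [MetricSpace Y] (f : X → Y) : Prop :=
  MetricallyProper f ∧
    ∀ R > (0:ℝ), ∃ S > (0:ℝ), ∀ x x' : X, dist x x' ≤ R → dist (f x) (f x') ≤ S

/-- Coarsely surjective map. -/
def CoarselySurjective {X Y : Type*} [MetricSpace X] [MetricSpace Y] (f : X → Y) : Prop :=
  ∃ R > (0:ℝ), ∀ y : Y, ∃ x : X, dist y (f x) ≤ R

/-- `f` is coarsely `n`-to-1. -/
def CoarselyNTo1 {X Y : Type*} [MetricSpace X] [MetricSpace Y] (f : X → Y) (n : ℕ) : Prop :=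
  ∀ R > (0:ℝ), ∃ S > (0:ℝ), ∀ A : Set Y, (∀ y ∈ A, ∀ y' ∈ A, dist y y' ≤ R) →
    ∃ V : Fin n → Set X, (∀ i, ∀ x ∈ V i, ∀ x' ∈ V i, dist x x' ≤ S) ∧ f ⁻¹' A ⊆ ⋃ i, V i

/-- `f` is coarsely finite-to-1. -/
def CoarselyFiniteTo1 {X Y : Type*} [MetricSpace X] [MetricSpace Y] (f : X → Y) : Prop :=
  ∀ R > (0:ℝ), ∃ S > (0:ℝ), ∃ m : ℕ, ∀ A : Set Y, (∀ y ∈ A, ∀ y' ∈ A, dist y y' ≤ R) →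
    ∃ V : Fin m → Set X, (∀ i, ∀ x ∈ V i, ∀ x' ∈ V i, dist x x' ≤ S) ∧ f ⁻¹' A ⊆ ⋃ i, V i

/-- Two maps are close. -/
def Close {X Y : Type*} [MetricSpace X] [MetricSpace Y] (f g : X → Y) : Prop :=
  ∃ R > (0:ℝ), ∀ x : X, dist (f x) (g x) ≤ R

/-- `f` is a coarse equivalence. -/
def CoarseEquivalence {X Y : Type*} [MetricSpace X] [MetricSpace Y] (f : X → Y) : Prop :=
  CoarseMap f ∧ ∃ g : Y → X, CoarseMap g ∧ Close (f ∘ g) id ∧ Close (g ∘ f) id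

/-- `X` and `Y` are coarsely equivalent. -/
def CoarselyEquivalent (X Y : Type*) [MetricSpace X] [MetricSpace Y] : Prop :=
  ∃ f : X → Y, CoarseEquivalence f

/-- A family of subsets is uniformly bounded. -/
def UnifBounded {X : Type*} [MetricSpace X] (𝒰 : Set (Set X)) : Prop :=
  ∃ S : ℝ, ∀ U ∈ 𝒰, ∀ x ∈ U, ∀ y ∈ U, dist x y ≤ S

/-- A family of subsets is `R`-disjoint: distinct members lie at distance `> R`. -/
def RDisjointFam {X : Type*} [MetricSpace X] (𝒰 : Set (Set X)) (R : ℝ) : Prop :=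
  ∀ U ∈ 𝒰, ∀ V ∈ 𝒰, U ≠ V → ∀ x ∈ U, ∀ y ∈ V, R < dist x y

/-- `asdim X ≤ n`. -/
def ASDimLE (X : Type*) [MetricSpace X] (n : ℕ) : Prop :=
  ∀ R > (0:ℝ), ∃ 𝒰 : Fin (n + 1) → Set (Set X),
    (∀ i, UnifBounded (𝒰 i)) ∧ (∀ i, RDisjointFam (𝒰 i) R) ∧
      ∀ x : X, ∃ i, ∃ U ∈ 𝒰 i, x ∈ U

/-- The asymptotic dimension of `X`, valued in `ℕ∞`. -/
noncomputable def asdim (X : Type*) [MetricSpace X] : ℕ∞ :=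
  sInf {n : ℕ∞ | ∃ m : ℕ, n = (m : ℕ∞) ∧ ASDimLE X m}

/-- TI-increasing functions `[0,∞) → [0,∞)`. -/
def TIIncreasing (ρ : NNReal → NNReal) : Prop :=
  Monotone ρ ∧ Filter.Tendsto ρ Filter.atTop Filter.atTop

/-- The variable-radius neighborhood `N(A, ρ)` with respect to a basepoint `x₀`. -/
def GrowNbhd {X : Type*} [MetricSpace X] (x₀ : X) (A : Set X) (ρ : NNReal → NNReal) : Set X :=
  {x' | ∃ x ∈ A, nndist x' x ≤ ρ (nndist x x₀)}

/-- `f` is coarsely open (with respect to basepoints `x₀`, `y₀`). -/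
def CoarselyOpen {X Y : Type*} [MetricSpace X] [MetricSpace Y] (f : X → Y)
    (x₀ : X) (y₀ : Y) : Prop :=
  ∀ A : Set X, ¬ IsBounded A → ∀ ρ : NNReal → NNReal, TIIncreasing ρ →
    ∃ ρ' : NNReal → NNReal, TIIncreasing ρ' ∧
      GrowNbhd y₀ (f '' A) ρ' ⊆ f '' GrowNbhd x₀ A ρ

/-- `N(A, R)`, the closed `R`-neighborhood of `A`. -/
def NbhdR {X : Type*} [MetricSpace X] (A : Set X) (R : ℝ) : Set X :=
  {x | ∃ a ∈ A, dist x a ≤ R}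

/-- A finite collection of subsets is gradually disjoint. -/
def GraduallyDisjoint {X : Type*} [MetricSpace X] {k : ℕ} (A : Fin k → Set X) : Prop :=
  ∀ R > (0:ℝ), ∃ B : Set X, IsBounded B ∧
    ∀ i j, i ≠ j → Disjoint (NbhdR (A i) R \ B) (NbhdR (A j) R \ B)

/-- A finite collection of subsets diverges. -/
def Diverges {X : Type*} [MetricSpace X] {k : ℕ} (A : Fin k → Set X) : Prop :=
  ∀ R > (0:ℝ), IsBounded (⋂ i, NbhdR (A i) R)

/-- A countable collection of subsets is gradually disjoint: every finite
subcollection is. -/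
def GraduallyDisjointSeq {X : Type*} [MetricSpace X] (A : ℕ → Set X) : Prop :=
  ∀ s : Finset ℕ, ∀ R > (0:ℝ), ∃ B : Set X, IsBounded B ∧
    ∀ i ∈ s, ∀ j ∈ s, i ≠ j → Disjoint (NbhdR (A i) R \ B) (NbhdR (A j) R \ B)

/-- A countable collection of subsets diverges: some finite subcollection diverges. -/
def DivergesSeq {X : Type*} [MetricSpace X] (A : ℕ → Set X) : Prop :=
  ∃ s : Finset ℕ, ∀ R > (0:ℝ), IsBounded (⋂ i ∈ s, NbhdR (A i) R)

/-- A complex-valued function on a metric space is slowly oscillating. -/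
def SlowlyOscillating {X : Type*} [MetricSpace X] (φ : X → ℂ) : Prop :=
  ∀ R > (0:ℝ), ∀ ε > (0:ℝ), ∃ A : Set X, IsBounded A ∧
    ∀ x : X, ∀ p ∈ closedBall x R \ A, ∀ p' ∈ closedBall x R \ A, dist (φ p) (φ p') ≤ ε
/-- The coarse Cantor set: finitely supported `{0,1}`-sequences, encoded as the
finite set of indices where the sequence equals `1`, with the metric
`d(a,b) = ∑_i |a_i - b_i| · 2^i` (the sum of `2^i` over the symmetric
difference of the supports). -/
abbrev CoarseCantor : Type := Finset ℕ

noncomputable instance : MetricSpace CoarseCantor :=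
  { dist := fun A B : Finset ℕ => ∑ i ∈ symmDiff A B, (2:ℝ) ^ i
    dist_self := fun A => by
      show (∑ i ∈ symmDiff A A, (2:ℝ) ^ i) = 0
      simp [symmDiff_self]
    dist_comm := fun A B => by
      show (∑ i ∈ symmDiff A B, (2:ℝ) ^ i) = ∑ i ∈ symmDiff B A, (2:ℝ) ^ i
      rw [symmDiff_comm]
    dist_triangle := fun A B C => by
      show (∑ i ∈ symmDiff A C, (2:ℝ) ^ i) ≤
        (∑ i ∈ symmDiff A B, (2:ℝ) ^ i) + ∑ i ∈ symmDiff B C, (2:ℝ) ^ i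
      have hsub : symmDiff A C ⊆ symmDiff A B ∪ symmDiff B C := by
        simpa [Finset.sup_eq_union] using symmDiff_triangle A B C
      have h1 : ∑ i ∈ symmDiff A C, (2:ℝ) ^ i ≤
          ∑ i ∈ symmDiff A B ∪ symmDiff B C, (2:ℝ) ^ i :=
        Finset.sum_le_sum_of_subset_of_nonneg hsub (fun i _ _ => by positivity)
      have h2 := Finset.sum_union_inter (s₁ := symmDiff A B) (s₂ := symmDiff B C)
        (f := fun i : ℕ => (2:ℝ) ^ i)
      have h3 : (0:ℝ) ≤ ∑ i ∈ symmDiff A B ∩ symmDiff B C, (2:ℝ) ^ i :=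
        Finset.sum_nonneg fun i _ => by positivity
      linarith
    eq_of_dist_eq_zero := fun {A B} h => by
      have h' : (∑ i ∈ symmDiff A B, (2:ℝ) ^ i) = 0 := h
      have hempty : symmDiff A B = ∅ := by
        by_contra hne
        have hpos : 0 < ∑ i ∈ symmDiff A B, (2:ℝ) ^ i :=
          Finset.sum_pos (fun i _ => by positivity)
            (Finset.nonempty_iff_ne_empty.mpr hne)
        exact absurd h' (ne_of_gt hpos)
      have : symmDiff A B = (⊥ : Finset ℕ) := by simpa using hempty
      exact symmDiff_eq_bot.mp this }

/-- The coarse version of the Cantor map: `a ↦ ∑ aᵢ 2^i`. -/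
def cantorMap (A : CoarseCantor) : ℕ := ∑ i ∈ A, 2 ^ i

theorem cc_dist (A B : CoarseCantor) : dist A B = ∑ i ∈ symmDiff A B, (2:ℝ) ^ i := rfl

theorem cc_bij : Function.Bijective cantorMap :=
  Finset.equivBitIndices.symm.bijective

theorem cc_half (A B : CoarseCantor) : (cantorMap A : ℝ) - cantorMap B ≤ dist A B := by
  rw [cc_dist]
  have h : (cantorMap A : ℝ) ≤ ∑ i ∈ B ∪ symmDiff A B, (2:ℝ) ^ i := by
    unfold cantorMap
    push_cast
    apply Finset.sum_le_sum_of_subset_of_nonneg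
    · intro i hi
      by_cases hb : i ∈ B <;> simp [Finset.mem_symmDiff, hi, hb]
    · intros; positivity
  have h2 := Finset.sum_union_inter (s₁ := B) (s₂ := symmDiff A B) (f := fun i : ℕ => (2:ℝ) ^ i)
  have h3 : (0:ℝ) ≤ ∑ i ∈ B ∩ symmDiff A B, (2:ℝ) ^ i :=
    Finset.sum_nonneg fun i _ => by positivity
  have h4 : (cantorMap B : ℝ) = ∑ i ∈ B, (2:ℝ) ^ i := by
    unfold cantorMap
    push_cast
    rfl
  linarith

theorem cc_lip (A B : CoarseCantor) : dist (cantorMap A) (cantorMap B) ≤ dist A B := by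
  rw [Nat.dist_eq, abs_le]
  have h1 := cc_half A B
  have h2 := cc_half B A
  rw [dist_comm] at h2
  constructor <;> linarith

/-- The sum of the bits above `k`, shifted down, is the quotient by `2 ^ k`. -/
theorem cc_div (A : CoarseCantor) (k : ℕ) :
    cantorMap A / 2 ^ k = ∑ i ∈ A with k ≤ i, 2 ^ (i - k) := by
  have h : cantorMap A = 2 ^ k * (∑ i ∈ A with k ≤ i, 2 ^ (i - k)) +
      ∑ i ∈ A with ¬ k ≤ i, 2 ^ i := by
    unfold cantorMap
    rw [← Finset.sum_filter_add_sum_filter_not A (fun i => k ≤ i), Finset.mul_sum]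
    congr 1
    apply Finset.sum_congr rfl
    intro i hi
    rw [← pow_add]
    congr 1
    have := (Finset.mem_filter.1 hi).2
    omega
  have h2 : ∑ i ∈ A with ¬ k ≤ i, 2 ^ i < 2 ^ k :=
    Nat.geomSum_lt le_rfl (fun i hi => by simpa using (Finset.mem_filter.1 hi).2)
  rw [h, Nat.mul_add_div (by positivity), Nat.div_eq_of_lt h2, add_zero]

theorem cc_mem (A B : CoarseCantor) (k : ℕ) (h : cantorMap A / 2 ^ k = cantorMap B / 2 ^ k)
    (i : ℕ) (hi : k ≤ i) (hA : i ∈ A) : i ∈ B := by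
  have key : ∀ C : CoarseCantor, cantorMap C / 2 ^ k =
      cantorMap ((C.filter (fun i => k ≤ i)).image (fun i => i - k)) := by
    intro C
    rw [cc_div]
    unfold cantorMap
    rw [Finset.sum_image]
    intro x hx y hy hxy
    have h1 := (Finset.mem_filter.1 hx).2
    have h2 := (Finset.mem_filter.1 hy).2
    simp only at hxy
    omega
  rw [key, key] at h
  have h' := cc_bij.1 h
  have hm : i - k ∈ (A.filter (fun i => k ≤ i)).image (fun i => i - k) :=
    Finset.mem_image.2 ⟨i, Finset.mem_filter.2 ⟨hA, hi⟩, rfl⟩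
  rw [h'] at hm
  obtain ⟨j, hj, hjk⟩ := Finset.mem_image.1 hm
  obtain ⟨hjB, hkj⟩ := Finset.mem_filter.1 hj
  have : j = i := by omega
  exact this ▸ hjB

theorem cc_close (A B : CoarseCantor) (k : ℕ) (h : cantorMap A / 2 ^ k = cantorMap B / 2 ^ k) :
    dist A B ≤ 2 ^ k := by
  rw [cc_dist]
  have h2 : ∑ i ∈ symmDiff A B, 2 ^ i < 2 ^ k := by
    apply Nat.geomSum_lt le_rfl
    intro i hi
    by_contra hk
    push Not at hk
    rcases Finset.mem_symmDiff.1 hi with ⟨h1, h2⟩ | ⟨h1, h2⟩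
    · exact h2 (cc_mem A B k h i hk h1)
    · exact h2 (cc_mem B A k h.symm i hk h1)
  exact_mod_cast h2.le

/-- The map `f : D → ℕ`, `f(a) = ∑ aᵢ 2^i`, from the coarse
Cantor set (with the metric `d(a,b) = ∑ |aᵢ - bᵢ| 2^i`) to `ℕ` with the
Euclidean metric, is a bijection, is coarse, and is coarsely 2-to-1. -/
theorem cantorMap_bijective_coarse_coarsely2To1 :
    Function.Bijective cantorMap ∧ CoarseMap cantorMap ∧ CoarselyNTo1 cantorMap 2 := by
  refine ⟨cc_bij, ⟨?_, fun R hR => ⟨R, hR, fun x x' h => (cc_lip x x').trans h⟩⟩, ?_⟩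
  · intro B hB
    have hf : B.Finite := by
      have := hB.isCompact_closure
      exact (isCompact_iff_finite.1 this).subset subset_closure
    exact (hf.preimage cc_bij.1.injOn).isBounded
  · intro R hR
    obtain ⟨k, hk⟩ := pow_unbounded_of_one_lt R (one_lt_two : (1:ℝ) < 2)
    refine ⟨2 ^ k, by positivity, fun A hA => ?_⟩
    refine ⟨fun j => {x | cantorMap x / 2 ^ k = sInf A / 2 ^ k + j}, ?_, ?_⟩
    · intro j x hx x' hx'
      exact cc_close x x' k (hx.trans hx'.symm)
    · intro x hx
      have hx : cantorMap x ∈ A := hx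
      have hm : sInf A ∈ A := Nat.sInf_mem ⟨_, hx⟩
      have hle : sInf A ≤ cantorMap x := Nat.sInf_le hx
      have hd := hA _ hx _ hm
      rw [Nat.dist_eq] at hd
      have hlt : (cantorMap x : ℝ) < sInf A + 2 ^ k := by
        have := le_abs_self ((cantorMap x : ℝ) - (sInf A : ℕ))
        push_cast at *
        linarith
      have hlt' : cantorMap x < sInf A + 2 ^ k := by exact_mod_cast hlt
      have h1 : sInf A / 2 ^ k ≤ cantorMap x / 2 ^ k := Nat.div_le_div_right hle
      have h2 : cantorMap x / 2 ^ k ≤ sInf A / 2 ^ k + 1 := by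
        rw [← Nat.add_div_right _ (by positivity)]
        exact Nat.div_le_div_right hlt'.le
      rw [Set.mem_iUnion]
      rcases Nat.lt_or_ge (sInf A / 2 ^ k) (cantorMap x / 2 ^ k) with h | h
      · exact ⟨1, show _ = _ + 1 by omega⟩
      · exact ⟨0, show _ = _ + 0 by omega⟩
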